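/- The Schmidt number of the state ρ̃(λ) on ℂ⁸⊗ℂ⁸ equals 2 for λ = 0, and equals 3 for every λ ∈ (0, 1]. -/

import Mathlib

open Matrix
open scoped Kronecker ComplexOrder

/-- The Schmidt rank of a bipartite vector `ψ : m × n → ℂ`, i.e. the rank of the
matrix `C_ψ` with `(C_ψ)_{ij} = ψ (i, j)`. -/
noncomputable def schmidtRank {m n : Type*} [Fintype m] [Fintype n] (ψ : m × n → ℂ) : ℕ :=
  (Matrix.of fun i j => ψ (i, j)).rank

/-- A matrix `ρ` indexed by `m × n` has Schmidt number at most `r` if it can be written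
as `∑_k ψ_k ψ_k†` with each `ψ_k` of Schmidt rank at most `r`. -/
def SchmidtNumberLE {m n : Type*} [Fintype m] [Fintype n]
    (ρ : Matrix (m × n) (m × n) ℂ) (r : ℕ) : Prop :=
  ∃ (k : ℕ) (ψ : Fin k → m × n → ℂ),
    (∀ i, schmidtRank (ψ i) ≤ r) ∧
    ρ = ∑ i, Matrix.vecMulVec (ψ i) (star (ψ i))

/-- The Schmidt number: the least `r` such that `SchmidtNumberLE ρ r`. -/
noncomputable def schmidtNumber {m n : Type*} [Fintype m] [Fintype n]
    (ρ : Matrix (m × n) (m × n) ℂ) : ℕ :=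
  sInf {r | SchmidtNumberLE ρ r}

/-- A density matrix: positive semidefinite with unit trace. -/
def IsDensityMatrix {n : Type*} [Fintype n] (ρ : Matrix n n ℂ) : Prop :=
  ρ.PosSemidef ∧ ρ.trace = 1

/-- An effect: a Hermitian matrix `M` with `0 ≤ M ≤ I`. -/
def IsEffect {n : Type*} [Fintype n] [DecidableEq n] (M : Matrix n n ℂ) : Prop :=
  M.PosSemidef ∧ (1 - M).PosSemidef

/-- The maximally entangled unit vector `|Φ⁺_d⟩ = (1/√d) ∑ᵢ e_{(i,i)}`. -/
noncomputable def maxEnt (d : ℕ) : Fin d × Fin d → ℂ :=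
  fun p => if p.1 = p.2 then ((1 / Real.sqrt d : ℝ) : ℂ) else 0

/-- The projector `P_d = |Φ⁺_d⟩⟨Φ⁺_d|`. -/
noncomputable def projME (d : ℕ) : Matrix (Fin d × Fin d) (Fin d × Fin d) ℂ :=
  Matrix.vecMulVec (maxEnt d) (star (maxEnt d))

/-- The isotropic state `ρ^iso_d(p) = p P_d + (1−p) I/d²`. -/
noncomputable def isoState (d : ℕ) (p : ℝ) : Matrix (Fin d × Fin d) (Fin d × Fin d) ℂ :=
  (p : ℂ) • projME d + (((1 - p) / (d ^ 2 : ℝ) : ℝ) : ℂ) • 1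

/-- `|φ₂⁺⟩ = (1/√2)(e_{(0,0)} + e_{(1,1)}) ∈ ℂ⁸⊗ℂ⁸`. -/
noncomputable def phi2 : Fin 8 × Fin 8 → ℂ :=
  fun q => if q = (0, 0) ∨ q = (1, 1) then ((1 / Real.sqrt 2 : ℝ) : ℂ) else 0

/-- `ρ̃(λ) = λ ρ^iso₈(0.24) + (1−λ)|φ₂⁺⟩⟨φ₂⁺|`. -/
noncomputable def rhoTilde (l : ℝ) : Matrix (Fin 8 × Fin 8) (Fin 8 × Fin 8) ℂ :=
  (l : ℂ) • isoState 8 0.24 + ((1 - l : ℝ) : ℂ) • Matrix.vecMulVec phi2 (star phi2)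

/-! Write `δ = ∑ᵢ e_{(i,i)}`. A vector `ψ` with coefficient matrix `C` satisfies
`|⟨δ, ψ⟩|² = |tr C|² ≤ rank C * ‖ψ‖²`, so `⟨δ, ρ δ⟩ ≤ r * tr ρ` whenever the Schmidt number of `ρ`
is at most `r`. For `ρ̃(λ)` the left side is `2 + 0.015 λ`, which exceeds `2` as soon as `0 < λ`.

For the upper bound, averaging `ψ ψ†` over `V ⊗ V̄` with `V` monomial (diagonal phases times
permutations) does not increase the Schmidt number, and the average depends on `C` only through
`|tr C|²`, `‖C‖²` and `∑ᵢ |Cᵢᵢ|²`. Starting from a coordinate projection of rank `r` and from one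
with constant diagonal (its Fourier conjugate), the components that break isotropy have opposite
signs. With weights `1 : d` they cancel, which leaves the isotropic state with
`⟨δ, ρ δ⟩ = r * tr ρ`. Mixing in the identity gives every `ρ^iso_d(p)` with
`p + (1 - p) / d² ≤ r / d`; for `d = 8` and `p = 0.24` this holds with `r = 3`. -/

section TraceRank

variable {m n 𝕜 : Type*} [Fintype m] [RCLike 𝕜]

theorem conjTranspose_mul_self_apply_self (A : Matrix m n 𝕜) (j : n) :
    (Aᴴ * A) j j = ((∑ i, ‖A i j‖ ^ 2 : ℝ) : 𝕜) := by
  simp [mul_apply, RCLike.conj_mul]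

variable [Fintype n]

theorem trace_conjTranspose_mul_self_eq_sum_norm_sq (A : Matrix m n 𝕜) :
    (Aᴴ * A).trace = ((∑ j, ∑ i, ‖A i j‖ ^ 2 : ℝ) : 𝕜) := by
  simp only [trace, diag_apply, conjTranspose_mul_self_apply_self, map_sum]

theorem norm_trace_sq_le_card_mul_sum_norm_sq (A : Matrix n n 𝕜) (s : Finset n)
    (hs : ∀ j ∉ s, A j j = 0) : ‖A.trace‖ ^ 2 ≤ s.card * ∑ j, ∑ i, ‖A i j‖ ^ 2 := by
  have htrace : A.trace = ∑ j ∈ s, A j j :=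
    (Finset.sum_subset (Finset.subset_univ s) fun j _ => hs j).symm
  have hdiag (j : n) : ‖A j j‖ ^ 2 ≤ ∑ i, ‖A i j‖ ^ 2 :=
    Finset.single_le_sum (f := fun i => ‖A i j‖ ^ 2) (fun i _ => by positivity)
      (Finset.mem_univ j)
  calc ‖A.trace‖ ^ 2 ≤ (∑ j ∈ s, ‖A j j‖) ^ 2 := by
        rw [htrace]; gcongr; exact norm_sum_le _ _
    _ ≤ s.card * ∑ j ∈ s, ‖A j j‖ ^ 2 := sq_sum_le_card_mul_sum_sq
    _ ≤ s.card * ∑ j ∈ s, ∑ i, ‖A i j‖ ^ 2 := by gcongr with j; exact hdiag j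
    _ ≤ s.card * ∑ j, ∑ i, ‖A i j‖ ^ 2 := by gcongr; exact Finset.subset_univ s

theorem norm_trace_sq_le_rank_mul_sum_norm_sq (A : Matrix n n 𝕜) :
    ‖A.trace‖ ^ 2 ≤ A.rank * ∑ j, ∑ i, ‖A i j‖ ^ 2 := by
  classical
  have hH : (Aᴴ * A).IsHermitian := isHermitian_conjTranspose_mul_self A
  let U : Matrix n n 𝕜 := hH.eigenvectorUnitary
  let B : Matrix n n 𝕜 := star U * A * U
  let s : Finset n := {k | hH.eigenvalues k ≠ 0}
  have hUU : U * star U = 1 := Unitary.coe_mul_star_self hH.eigenvectorUnitary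
  have hBB : Bᴴ * B = star U * (Aᴴ * A) * U := by
    calc Bᴴ * B = star U * Aᴴ * (U * star U) * A * U := by
          simp only [B, conjTranspose_mul, star_eq_conjTranspose, conjTranspose_conjTranspose,
            Matrix.mul_assoc]
      _ = star U * (Aᴴ * A) * U := by simp only [hUU, Matrix.mul_one, Matrix.mul_assoc]
  have hdiag : Bᴴ * B = diagonal (RCLike.ofReal ∘ hH.eigenvalues) := by
    rw [hBB, ← hH.conjStarAlgAut_star_eigenvectorUnitary, Unitary.conjStarAlgAut_star_apply]
  have htrace : B.trace = A.trace := by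
    rw [trace_mul_comm, ← Matrix.mul_assoc, hUU, Matrix.one_mul]
  have hvanish (k : n) (hk : k ∉ s) : B k k = 0 := by
    have hk0 : hH.eigenvalues k = 0 := by simpa [s] using hk
    have hcol : ∑ i, ‖B i k‖ ^ 2 = 0 := by
      have h := conjTranspose_mul_self_apply_self B k
      rw [hdiag, diagonal_apply_eq, Function.comp_apply, hk0] at h
      exact_mod_cast h.symm
    simpa using (Finset.sum_eq_zero_iff_of_nonneg fun i _ => sq_nonneg ‖B i k‖).mp hcol k
  have hnorm : ∑ j, ∑ i, ‖B i j‖ ^ 2 = ∑ j, ∑ i, ‖A i j‖ ^ 2 := by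
    have h : (Bᴴ * B).trace = (Aᴴ * A).trace := by
      rw [hBB, trace_mul_comm, ← Matrix.mul_assoc, hUU, Matrix.one_mul]
    rw [trace_conjTranspose_mul_self_eq_sum_norm_sq,
      trace_conjTranspose_mul_self_eq_sum_norm_sq] at h
    exact_mod_cast h
  have hcard : s.card = A.rank := by
    rw [← rank_conjTranspose_mul_self, hH.rank_eq_card_non_zero_eigs, Fintype.card_subtype]
  rw [← htrace, ← hnorm, ← hcard]
  exact norm_trace_sq_le_card_mul_sum_norm_sq B s hvanish

end TraceRank

section Permutations

variable {ι R : Type*} [Fintype ι] [DecidableEq ι] [CommRing R]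

theorem card_mul_sum_perm_apply (f : ι → R) (i : ι) :
    (Fintype.card ι : R) * ∑ σ : Equiv.Perm ι, f (σ i) =
      (Fintype.card ι).factorial * ∑ a, f a := by
  have hconst (j : ι) : ∑ σ : Equiv.Perm ι, f (σ j) = ∑ σ : Equiv.Perm ι, f (σ i) := by
    rw [← Equiv.sum_comp (Equiv.mulRight (Equiv.swap i j))]
    simp
  calc (Fintype.card ι : R) * ∑ σ : Equiv.Perm ι, f (σ i)
      = ∑ j, ∑ σ : Equiv.Perm ι, f (σ j) := by simp [hconst]
    _ = ∑ σ : Equiv.Perm ι, ∑ j, f (σ j) := Finset.sum_comm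
    _ = (Fintype.card ι).factorial * ∑ a, f a := by
        simp [Equiv.sum_comp, Fintype.card_perm]

theorem card_mul_card_sub_one_mul_sum_perm_apply (f : ι → ι → R) {i j : ι} (hij : i ≠ j) :
    Fintype.card ι * (Fintype.card ι - 1) * ∑ σ : Equiv.Perm ι, f (σ i) (σ j) =
      (Fintype.card ι).factorial * (∑ a, ∑ b, f a b - ∑ a, f a a) := by
  have hconst (p : ι × ι) (hp : p ∈ Finset.univ.offDiag) :
      ∑ σ : Equiv.Perm ι, f (σ p.1) (σ p.2) = ∑ σ : Equiv.Perm ι, f (σ i) (σ j) := by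
    obtain ⟨τ, hi, hj⟩ := MulAction.is_two_pretransitive_iff.mp
      (Equiv.Perm.isMultiplyPretransitive ι 2) hij (Finset.mem_offDiag.mp hp).2.2
    rw [← hi, ← hj, ← Equiv.sum_comp (Equiv.mulRight τ) fun σ : Equiv.Perm ι => f (σ i) (σ j)]
    simp
  have hinv (σ : Equiv.Perm ι) :
      ∑ p ∈ Finset.univ.offDiag, f (σ p.1) (σ p.2) = ∑ p ∈ Finset.univ.offDiag, f p.1 p.2 :=
    Finset.sum_equiv (σ.prodCongr σ) (by simp) (by simp)
  have hcard : ((Finset.univ.offDiag (α := ι)).card : R) =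
      Fintype.card ι * (Fintype.card ι - 1) := by
    rw [Finset.offDiag_card, Finset.card_univ, Nat.cast_sub (Nat.le_mul_self _)]
    push_cast
    ring
  have hsplit : ∑ p ∈ Finset.univ.offDiag, f p.1 p.2 = ∑ a, ∑ b, f a b - ∑ a, f a a := by
    rw [eq_sub_iff_add_eq', ← Fintype.sum_prod_type', ← Finset.univ_product_univ,
      ← Finset.diag_union_offDiag, Finset.sum_union (Finset.disjoint_diag_offDiag _),
      Finset.sum_diag]
  calc _ = ∑ p ∈ Finset.univ.offDiag, ∑ σ : Equiv.Perm ι, f (σ p.1) (σ p.2) := by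
        rw [Finset.sum_congr rfl hconst, Finset.sum_const, nsmul_eq_mul, hcard]
    _ = ∑ σ : Equiv.Perm ι, ∑ p ∈ Finset.univ.offDiag, f (σ p.1) (σ p.2) := Finset.sum_comm
    _ = _ := by simp [hinv, ← hsplit, Fintype.card_perm]

end Permutations

theorem addChar_map_sub_eq_mul_star {G : Type*} [AddCommGroup G] [Finite G] (χ : AddChar G ℂ)
    (a b : G) : χ (a - b) = χ a * star (χ b) := by
  rw [sub_eq_add_neg, AddChar.map_add_eq_mul, AddChar.map_neg_eq_conj, starRingEnd_apply]

theorem inv_sqrt_mul_inv_sqrt (d : ℕ) :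
    ((√d : ℝ) : ℂ)⁻¹ * ((√d : ℝ) : ℂ)⁻¹ = (d : ℂ)⁻¹ := by
  rw [← mul_inv, ← Complex.ofReal_mul, Real.mul_self_sqrt d.cast_nonneg, Complex.ofReal_natCast]

section Fourier

variable (ι : Type*) [Fintype ι] [DecidableEq ι] [Nonempty ι]

theorem exists_unitaryGroup_norm_sq_eq_inv_card :
    ∃ U : unitaryGroup ι ℂ, ∀ i j, ‖(U : Matrix ι ι ℂ) i j‖ ^ 2 = (Fintype.card ι : ℝ)⁻¹ := by
  let d := Fintype.card ι
  have : NeZero d := ⟨Fintype.card_ne_zero⟩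
  let e : ι ≃ ZMod d := Fintype.equivOfCardEq (ZMod.card d).symm
  let F : Matrix ι ι ℂ := of fun i j => ZMod.stdAddChar (e j * e i)
  have hF : F * star F = (d : ℂ) • 1 := by
    ext i k
    have hsum : (F * star F) i k = ∑ j, ZMod.stdAddChar (e j * (e i - e k)) := by
      simp [F, mul_apply, mul_sub, addChar_map_sub_eq_mul_star]
    rw [hsum, e.sum_comp fun x => (ZMod.stdAddChar (x * (e i - e k)) : ℂ),
      AddChar.sum_mulShift _ (ZMod.isPrimitive_stdAddChar d)]
    simp [one_apply, sub_eq_zero]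
  refine ⟨⟨((√d : ℝ) : ℂ)⁻¹ • F, mem_unitaryGroup_iff.mpr ?_⟩, fun i j => ?_⟩
  · have hd : (d : ℂ) ≠ 0 := NeZero.ne _
    simp [hF, smul_smul, ← mul_assoc, inv_sqrt_mul_inv_sqrt, hd]
  · simp [F, d]

end Fourier

section SchmidtNumber

variable {m n : Type*} [Fintype m] [Fintype n]

theorem schmidtRank_smul_le (c : ℂ) (ψ : m × n → ℂ) : schmidtRank (c • ψ) ≤ schmidtRank ψ := by
  classical
  have h : (of fun i j => (c • ψ) (i, j)) =
      (c • (1 : Matrix m m ℂ)) * of fun i j => ψ (i, j) := by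
    ext i j; simp
  rw [schmidtRank, h]
  exact rank_mul_le_right _ _

theorem schmidtRank_single_le_one [DecidableEq m] [DecidableEq n] (p : m × n) (c : ℂ) :
    schmidtRank (Pi.single p c) ≤ 1 := by
  have h : (of fun i j => (Pi.single p c : m × n → ℂ) (i, j)) =
      vecMulVec (Pi.single p.1 c) (Pi.single p.2 1) := by
    ext i j
    by_cases hj : j = p.2 <;> simp [vecMulVec_apply, Pi.single_apply, Prod.ext_iff, hj]
  rw [schmidtRank, h]
  exact rank_vecMulVec_le _ _

theorem schmidtNumberLE_vecMulVec {ψ : m × n → ℂ} {r : ℕ} (h : schmidtRank ψ ≤ r) :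
    SchmidtNumberLE (vecMulVec ψ (star ψ)) r :=
  ⟨1, fun _ => ψ, fun _ => h, by simp⟩

theorem schmidtNumberLE_zero (r : ℕ) : SchmidtNumberLE (0 : Matrix (m × n) (m × n) ℂ) r :=
  ⟨0, Fin.elim0, fun i => i.elim0, by simp⟩

namespace SchmidtNumberLE

variable {ρ σ : Matrix (m × n) (m × n) ℂ} {r s : ℕ}

theorem mono (h : SchmidtNumberLE ρ r) (hrs : r ≤ s) : SchmidtNumberLE ρ s := by
  obtain ⟨k, ψ, hψ, rfl⟩ := h
  exact ⟨k, ψ, fun i => (hψ i).trans hrs, rfl⟩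

theorem add (hρ : SchmidtNumberLE ρ r) (hσ : SchmidtNumberLE σ r) :
    SchmidtNumberLE (ρ + σ) r := by
  obtain ⟨k, ψ, hψ, rfl⟩ := hρ
  obtain ⟨l, φ, hφ, rfl⟩ := hσ
  exact ⟨k + l, Fin.append ψ φ, Fin.addCases (by simpa using hψ) (by simpa using hφ),
    by simp [Fin.sum_univ_add]⟩

theorem sum {ι : Type*} {f : ι → Matrix (m × n) (m × n) ℂ} (t : Finset ι)
    (h : ∀ i ∈ t, SchmidtNumberLE (f i) r) : SchmidtNumberLE (∑ i ∈ t, f i) r :=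
  Finset.sum_induction f (SchmidtNumberLE · r) (fun _ _ => add) (schmidtNumberLE_zero r) h

theorem smul (h : SchmidtNumberLE ρ r) {c : ℝ} (hc : 0 ≤ c) :
    SchmidtNumberLE ((c : ℂ) • ρ) r := by
  obtain ⟨k, ψ, hψ, rfl⟩ := h
  refine ⟨k, fun i => ((√c : ℝ) : ℂ) • ψ i, fun i => (schmidtRank_smul_le _ _).trans (hψ i), ?_⟩
  simp [Finset.smul_sum, smul_vecMulVec, vecMulVec_smul, smul_smul, Real.mul_self_sqrt hc]

end SchmidtNumberLE

theorem schmidtNumberLE_one [DecidableEq m] [DecidableEq n] :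
    SchmidtNumberLE (1 : Matrix (m × n) (m × n) ℂ) 1 := by
  have h : (1 : Matrix (m × n) (m × n) ℂ) =
      ∑ p, vecMulVec (Pi.single p 1) (star (Pi.single p 1)) := by
    simp only [← Pi.single_star, star_one, ← single_eq_single_vecMulVec_single]
    exact sum_single_one.symm
  rw [h]
  exact .sum _ fun p _ => schmidtNumberLE_vecMulVec (schmidtRank_single_le_one p 1)

end SchmidtNumber

/-- The unnormalised maximally entangled vector `∑ᵢ e_{(i,i)}`, the vectorisation of the identity
matrix. -/
def vecIdentity (ι : Type*) [DecidableEq ι] : ι × ι → ℂ :=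
  fun p => if p.1 = p.2 then 1 else 0

section LowerBound

variable {ι : Type*} [Fintype ι] [DecidableEq ι]

theorem star_vecIdentity_dotProduct (ψ : ι × ι → ℂ) :
    star (vecIdentity ι) ⬝ᵥ ψ = (of fun i j => ψ (i, j)).trace := by
  simp [vecIdentity, dotProduct, trace, Fintype.sum_prod_type, apply_ite]

theorem star_dotProduct_vecMulVec_mulVec {n : Type*} [Fintype n] (v ψ : n → ℂ) :
    star v ⬝ᵥ vecMulVec ψ (star ψ) *ᵥ v = ((‖star v ⬝ᵥ ψ‖ ^ 2 : ℝ) : ℂ) := by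
  have hconj : star ψ ⬝ᵥ v = star (star v ⬝ᵥ ψ) := by rw [star_dotProduct]
  rw [vecMulVec_mulVec, dotProduct_smul, hconj]
  simp [Complex.mul_conj']

theorem trace_vecMulVec_star {n : Type*} [Fintype n] (ψ : n → ℂ) :
    (vecMulVec ψ (star ψ)).trace = ((∑ p, ‖ψ p‖ ^ 2 : ℝ) : ℂ) := by
  simp [trace_vecMulVec, dotProduct, Complex.mul_conj']

theorem SchmidtNumberLE.re_dotProduct_mulVec_vecIdentity_le
    {ρ : Matrix (ι × ι) (ι × ι) ℂ} {r : ℕ} (h : SchmidtNumberLE ρ r) :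
    (star (vecIdentity ι) ⬝ᵥ ρ *ᵥ vecIdentity ι).re ≤ r * ρ.trace.re := by
  obtain ⟨k, ψ, hψ, rfl⟩ := h
  have hterm (x : Fin k) : ‖star (vecIdentity ι) ⬝ᵥ ψ x‖ ^ 2 ≤ r * ∑ p, ‖ψ x p‖ ^ 2 := by
    rw [star_vecIdentity_dotProduct, Fintype.sum_prod_type_right]
    refine (norm_trace_sq_le_rank_mul_sum_norm_sq _).trans ?_
    gcongr
    exacts [hψ x, le_rfl]
  simp only [sum_mulVec, dotProduct_sum, trace_sum, star_dotProduct_vecMulVec_mulVec,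
    trace_vecMulVec_star, Complex.re_sum, Complex.ofReal_re]
  rw [Finset.mul_sum]
  exact Finset.sum_le_sum fun x _ => hterm x

end LowerBound

section PhaseTwirl

variable {ι : Type*} [DecidableEq ι]

/-- The average of `ψ ψ†` over all diagonal unitaries `D ⊗ D̄`, where `C` is the coefficient matrix
of `ψ`: only the coefficients on which the phases cancel survive. -/
def phaseTwirl (C : Matrix ι ι ℂ) : Matrix (ι × ι) (ι × ι) ℂ :=
  of fun p q => if p = q ∨ p.1 = p.2 ∧ q.1 = q.2 then C p.1 p.2 * star (C q.1 q.2) else 0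

-- Modulo `2` the left side would also hold for `(i, j) = (l, k)`, hence the use of `ZMod 3`.
theorem single_sub_single_eq_iff (i j k l : ι) :
    (Pi.single i 1 - Pi.single j 1 : ι → ZMod 3) = Pi.single k 1 - Pi.single l 1 ↔
      (i, j) = (k, l) ∨ i = j ∧ k = l := by
  have hinj (a b : ι) : (Pi.single a 1 : ι → ZMod 3) = Pi.single b 1 ↔ a = b :=
    ⟨fun h => by simpa [Pi.single_apply] using congr_fun h a, fun h => h ▸ rfl⟩
  constructor
  · intro h
    rcases eq_or_ne i j with rfl | hij
    · simp_all [sub_eq_zero, eq_comm]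
    rcases eq_or_ne i k with rfl | hik
    · simp_all
    have hi : (1 : ZMod 3) = -if i = l then 1 else 0 := by
      simpa [Pi.single_apply, hij, hik] using congr_fun h i
    split_ifs at hi
    · exact absurd hi (by decide)
    · exact absurd hi (by decide)
  · rintro (h | ⟨rfl, rfl⟩) <;> simp_all

/-- The conjugate of `C` by the diagonal unitary with phases `χ (Pi.single i 1)`, as a vector. -/
def phaseShift (χ : AddChar (ι → ZMod 3) ℂ) (C : Matrix ι ι ℂ) : ι × ι → ℂ :=
  fun p => χ (Pi.single p.1 1 - Pi.single p.2 1) * C p.1 p.2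

variable [Fintype ι]

theorem schmidtRank_phaseShift_le (χ : AddChar (ι → ZMod 3) ℂ) (C : Matrix ι ι ℂ) :
    schmidtRank (phaseShift χ C) ≤ C.rank := by
  have h : (of fun i j => phaseShift χ C (i, j)) =
      diagonal (fun i => χ (Pi.single i 1)) * C * diagonal (fun j => χ (-Pi.single j 1)) := by
    ext i j
    simp only [of_apply, phaseShift, sub_eq_add_neg, AddChar.map_add_eq_mul, diagonal_mul,
      mul_diagonal]
    ring
  rw [schmidtRank, h]
  exact (rank_mul_le_left _ _).trans (rank_mul_le_right _ _)

theorem sum_vecMulVec_phaseShift (C : Matrix ι ι ℂ) :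
    ∑ χ, vecMulVec (phaseShift χ C) (star (phaseShift χ C)) =
      ((Fintype.card (ι → ZMod 3) : ℝ) : ℂ) • phaseTwirl C := by
  ext p q
  have hterm (χ : AddChar (ι → ZMod 3) ℂ) :
      vecMulVec (phaseShift χ C) (star (phaseShift χ C)) p q =
        χ (Pi.single p.1 1 - Pi.single p.2 1 - (Pi.single q.1 1 - Pi.single q.2 1)) *
          (C p.1 p.2 * star (C q.1 q.2)) := by
    simp only [vecMulVec_apply, phaseShift, addChar_map_sub_eq_mul_star, Pi.star_apply, star_mul',
      star_star]
    ring
  simp only [Matrix.sum_apply, hterm, ← Finset.sum_mul, AddChar.sum_apply_eq_ite, sub_eq_zero,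
    single_sub_single_eq_iff]
  simp [phaseTwirl]

theorem schmidtNumberLE_phaseTwirl (C : Matrix ι ι ℂ) :
    SchmidtNumberLE (phaseTwirl C) C.rank := by
  have hsum : SchmidtNumberLE
      (∑ χ, vecMulVec (phaseShift χ C) (star (phaseShift χ C))) C.rank :=
    .sum _ fun χ _ => schmidtNumberLE_vecMulVec (schmidtRank_phaseShift_le χ C)
  rw [sum_vecMulVec_phaseShift] at hsum
  have := hsum.smul (c := (Fintype.card (ι → ZMod 3) : ℝ)⁻¹) (by positivity)
  rwa [smul_smul, ← Complex.ofReal_mul, inv_mul_cancel₀ (by positivity), Complex.ofReal_one,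
    one_smul] at this

end PhaseTwirl

section PermutationTwirl

variable {ι : Type*} [Fintype ι] [DecidableEq ι]

/-- The average of `ψ ψ†` over all unitaries `V ⊗ V̄` with `V` a monomial matrix, scaled by
`card ι * (card ι - 1)`, where `C` is the coefficient matrix of `ψ`. -/
def monomialTwirl (C : Matrix ι ι ℂ) : Matrix (ι × ι) (ι × ι) ℂ :=
  (C.trace * star C.trace - ∑ a, C a a * star (C a a)) •
      vecMulVec (vecIdentity ι) (star (vecIdentity ι)) +
    ((C * Cᴴ).trace - ∑ a, C a a * star (C a a)) • 1 +
    ((Fintype.card ι + 1) * ∑ a, C a a * star (C a a) - C.trace * star C.trace - (C * Cᴴ).trace) •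
      diagonal (vecIdentity ι)

theorem sum_perm_phaseTwirl_submatrix (C : Matrix ι ι ℂ) :
    (Fintype.card ι * (Fintype.card ι - 1) : ℂ) •
        ∑ σ : Equiv.Perm ι, phaseTwirl (C.submatrix σ σ) =
      ((Fintype.card ι).factorial : ℂ) • monomialTwirl C := by
  have htrace : C.trace * star C.trace = ∑ a, ∑ b, C a a * star (C b b) := by
    simp [trace, Finset.sum_mul_sum]
  have hnorm : (C * Cᴴ).trace = ∑ a, ∑ b, C a b * star (C a b) := by simp [trace, mul_apply]
  ext ⟨i, j⟩ ⟨k, l⟩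
  simp only [monomialTwirl, Matrix.smul_apply, Matrix.sum_apply, Matrix.add_apply, phaseTwirl,
    of_apply, submatrix_apply, vecMulVec_apply, vecIdentity, one_apply, diagonal_apply, smul_eq_mul,
    Pi.star_apply]
  rcases eq_or_ne i j with rfl | hij
  · rcases eq_or_ne k l with rfl | hkl
    · rcases eq_or_ne i k with rfl | hik
      · have := card_mul_sum_perm_apply (fun a => C a a * star (C a a)) i
        simp only [and_self, or_self, ↓reduceIte, star_one, mul_one]
        linear_combination (Fintype.card ι - 1 : ℂ) * this
      · have := card_mul_card_sub_one_mul_sum_perm_apply (fun a b => C a a * star (C b b)) hik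
        simp [-Complex.star_def, -RCLike.star_def, this, htrace, hik]
    · have hne : (i, i) ≠ (k, l) := by rintro ⟨⟩; exact hkl rfl
      simp [hkl, hne]
  · rcases eq_or_ne (k, l) (i, j) with h | hne
    · obtain ⟨rfl, rfl⟩ := Prod.mk.inj h
      have := card_mul_card_sub_one_mul_sum_perm_apply (fun a b => C a b * star (C a b)) hij
      simp [-Complex.star_def, -RCLike.star_def, this, hnorm, hij]
    · simp [hij, hne.symm]

theorem schmidtNumberLE_monomialTwirl [Nontrivial ι] (C : Matrix ι ι ℂ) :
    SchmidtNumberLE (monomialTwirl C) C.rank := by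
  have hsum : SchmidtNumberLE (∑ σ : Equiv.Perm ι, phaseTwirl (C.submatrix σ σ)) C.rank :=
    .sum _ fun σ _ => (schmidtNumberLE_phaseTwirl _).mono (rank_submatrix C σ σ).le
  have hcard : (1 : ℝ) < Fintype.card ι := by exact_mod_cast Fintype.one_lt_card
  have hfact : ((Fintype.card ι).factorial : ℂ) ≠ 0 := by
    exact_mod_cast (Fintype.card ι).factorial_ne_zero
  have hscale : (0 : ℝ) ≤ Fintype.card ι * (Fintype.card ι - 1) / (Fintype.card ι).factorial := by
    have := sub_pos.mpr hcard
    positivity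
  convert hsum.smul hscale using 1
  push_cast
  rw [div_eq_inv_mul, mul_smul, sum_perm_phaseTwirl_submatrix, inv_smul_smul₀ hfact]

end PermutationTwirl

section Projections

variable {ι : Type*} [Fintype ι] [DecidableEq ι]

/-- The orthogonal projection onto the span of the columns of the unitary `U` indexed by `s`. -/
def columnProjection (U : unitaryGroup ι ℂ) (s : Finset ι) : Matrix ι ι ℂ :=
  (U : Matrix ι ι ℂ) * diagonal (fun a => if a ∈ s then 1 else 0) * star (U : Matrix ι ι ℂ)

variable (U : unitaryGroup ι ℂ) (s : Finset ι)

theorem rank_columnProjection_le : (columnProjection U s).rank ≤ s.card := by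
  calc (columnProjection U s).rank ≤ (diagonal (fun a => if a ∈ s then (1 : ℂ) else 0)).rank :=
        (rank_mul_le_left _ _).trans (rank_mul_le_right _ _)
    _ = s.card := by simp [rank_diagonal, Fintype.card_subtype]

theorem trace_columnProjection : (columnProjection U s).trace = s.card := by
  rw [columnProjection, trace_mul_comm, ← Matrix.mul_assoc, Unitary.coe_star_mul_self,
    Matrix.one_mul]
  simp [trace]

theorem columnProjection_mul_conjTranspose_self :
    columnProjection U s * (columnProjection U s)ᴴ = columnProjection U s := by
  have hU : star (U : Matrix ι ι ℂ) * U = 1 := Unitary.coe_star_mul_self U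
  have hstar : star (fun a => if a ∈ s then (1 : ℂ) else 0) = fun a => if a ∈ s then 1 else 0 := by
    ext a; simp [apply_ite]
  have hidem : diagonal (fun a => if a ∈ s then (1 : ℂ) else 0) *
      diagonal (fun a => if a ∈ s then 1 else 0) = diagonal fun a => if a ∈ s then 1 else 0 := by
    simp
  simp only [columnProjection, conjTranspose_mul, star_eq_conjTranspose,
    conjTranspose_conjTranspose, diagonal_conjTranspose, hstar] at hU ⊢
  simp only [Matrix.mul_assoc]
  rw [← Matrix.mul_assoc _ (U : Matrix ι ι ℂ), hU, Matrix.one_mul, ← Matrix.mul_assoc (diagonal _),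
    hidem]

theorem columnProjection_apply_self (i : ι) :
    columnProjection U s i i = ∑ a ∈ s, ((‖(U : Matrix ι ι ℂ) i a‖ ^ 2 : ℝ) : ℂ) := by
  simp [columnProjection, Matrix.mul_apply (M := _ * _), mul_diagonal, Complex.mul_conj']

theorem monomialTwirl_columnProjection_one :
    monomialTwirl (columnProjection 1 s) =
      (s.card ^ 2 - s.card : ℂ) • vecMulVec (vecIdentity ι) (star (vecIdentity ι)) +
        (Fintype.card ι * s.card - s.card ^ 2 : ℂ) • diagonal (vecIdentity ι) := by
  have hdiag : ∑ a, columnProjection 1 s a a * star (columnProjection 1 s a a) = (s.card : ℂ) := by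
    simp [columnProjection]
  simp only [monomialTwirl, trace_columnProjection, columnProjection_mul_conjTranspose_self, hdiag,
    star_natCast]
  module

variable {U} in
theorem card_smul_monomialTwirl_columnProjection_of_norm_sq_eq [Nonempty ι]
    (hU : ∀ i j, ‖(U : Matrix ι ι ℂ) i j‖ ^ 2 = (Fintype.card ι : ℝ)⁻¹) :
    (Fintype.card ι : ℂ) • monomialTwirl (columnProjection U s) =
      (s.card ^ 2 * (Fintype.card ι - 1) : ℂ) •
          vecMulVec (vecIdentity ι) (star (vecIdentity ι)) +
        (Fintype.card ι * s.card - s.card ^ 2 : ℂ) • 1 -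
        (Fintype.card ι * s.card - s.card ^ 2 : ℂ) • diagonal (vecIdentity ι) := by
  have hdiag : ∑ a, columnProjection U s a a * star (columnProjection U s a a) =
      (s.card : ℂ) ^ 2 / Fintype.card ι := by
    simp only [columnProjection_apply_self, hU, Complex.ofReal_inv, Complex.ofReal_natCast,
      Finset.sum_const, nsmul_eq_mul, star_mul', star_natCast, star_inv₀, Finset.card_univ]
    field_simp
  simp only [monomialTwirl, trace_columnProjection, columnProjection_mul_conjTranspose_self, hdiag,
    star_natCast]
  match_scalars <;> field_simp
  ring

end Projections

section IsotropicState

theorem schmidtNumberLE_extremal_isotropic {ι : Type*} [Fintype ι] [DecidableEq ι] [Nontrivial ι]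
    {r : ℕ} (hr : 0 < r) (hrd : r ≤ Fintype.card ι) :
    SchmidtNumberLE
      ((r * Fintype.card ι - 1 : ℂ) • vecMulVec (vecIdentity ι) (star (vecIdentity ι)) +
        (Fintype.card ι - r : ℂ) • 1) r := by
  obtain ⟨s, rfl⟩ : ∃ s : Finset ι, s.card = r := by
    obtain ⟨s, -, hs⟩ := Finset.exists_subset_card_eq (s := Finset.univ) hrd
    exact ⟨s, hs⟩
  obtain ⟨U, hU⟩ := exists_unitaryGroup_norm_sq_eq_inv_card ι
  have htwirl (V : unitaryGroup ι ℂ) :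
      SchmidtNumberLE (monomialTwirl (columnProjection V s)) s.card :=
    (schmidtNumberLE_monomialTwirl _).mono (rank_columnProjection_le V s)
  have hmix := (htwirl 1).add ((htwirl U).smul (Fintype.card ι).cast_nonneg)
  rw [Complex.ofReal_natCast, card_smul_monomialTwirl_columnProjection_of_norm_sq_eq s hU,
    monomialTwirl_columnProjection_one] at hmix
  have hs : (s.card : ℂ) ≠ 0 := by exact_mod_cast hr.ne'
  convert hmix.smul (c := (s.card : ℝ)⁻¹) (by positivity) using 1
  push_cast
  match_scalars <;> field_simp <;> ring

theorem projME_eq_smul_vecMulVec_vecIdentity (d : ℕ) :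
    projME d = (d : ℂ)⁻¹ • vecMulVec (vecIdentity (Fin d)) (star (vecIdentity (Fin d))) := by
  have hmaxEnt : maxEnt d = ((√d : ℝ) : ℂ)⁻¹ • vecIdentity (Fin d) := by
    ext p; simp [maxEnt, vecIdentity]
  simp [projME, hmaxEnt, smul_vecMulVec, vecMulVec_smul, smul_smul,
    inv_sqrt_mul_inv_sqrt]

theorem schmidtNumberLE_isoState {d r : ℕ} {p : ℝ} (hd : 2 ≤ d) (hrd : r ≤ d) (hp : 0 ≤ p)
    (hfid : p + (1 - p) / d ^ 2 ≤ r / d) : SchmidtNumberLE (isoState d p) r := by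
  have : Nontrivial (Fin d) := Fin.nontrivial_iff_two_le.mpr hd
  have hd' : (2 : ℝ) ≤ d := by exact_mod_cast hd
  have hbound : p * (d ^ 2 - 1) ≤ r * d - 1 := by
    field_simp at hfid
    linarith
  have hr : 0 < r := by
    have hleft : 0 ≤ p * ((d : ℝ) ^ 2 - 1) := mul_nonneg hp (by nlinarith)
    refine Nat.pos_of_ne_zero ?_
    rintro rfl
    simp only [Nat.cast_zero, zero_mul] at hbound
    linarith
  have hpos : (0 : ℝ) < r * d - 1 := by
    have : (1 : ℝ) ≤ r := by exact_mod_cast hr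
    nlinarith
  have hext := schmidtNumberLE_extremal_isotropic (ι := Fin d) hr (by simpa using hrd)
  have hnoise : 0 ≤ (1 - p) / d ^ 2 - p * (d - r) / (d * (r * d - 1)) := by
    rw [div_sub_div _ _ (by positivity) (by positivity)]
    refine div_nonneg ?_ (by positivity)
    nlinarith
  convert (hext.smul (c := p / (d * (r * d - 1))) (by positivity)).add
    ((schmidtNumberLE_one.mono hr).smul hnoise) using 1
  have hpos' : (d * r - 1 : ℂ) ≠ 0 := by rw [mul_comm]; exact_mod_cast hpos.ne'
  have hd0 : (d : ℂ) ≠ 0 := by norm_cast; omega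
  rw [isoState, projME_eq_smul_vecMulVec_vecIdentity, Fintype.card_fin]
  push_cast
  match_scalars <;> field_simp
  ring

end IsotropicState

section RhoTilde

theorem coefficientMatrix_phi2 : (of fun i j => phi2 (i, j)) =
    diagonal fun i => if i = 0 ∨ i = 1 then ((1 / √2 : ℝ) : ℂ) else 0 := by
  ext i j
  fin_cases i <;> fin_cases j <;> simp [phi2]

theorem schmidtRank_phi2_le_two : schmidtRank phi2 ≤ 2 := by
  rw [schmidtRank, coefficientMatrix_phi2, rank_diagonal, Fintype.card_subtype]
  calc _ ≤ ({0, 1} : Finset (Fin 8)).card := Finset.card_le_card fun i hi => by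
        simpa [or_iff_not_imp_left] using hi
    _ = 2 := rfl

theorem star_vecIdentity_dotProduct_phi2 : star (vecIdentity (Fin 8)) ⬝ᵥ phi2 = (√2 : ℝ) := by
  have hsqrt : 1 / √2 + 1 / √2 = √2 := by rw [← add_div, one_add_one_eq_two, Real.div_sqrt]
  rw [star_vecIdentity_dotProduct, coefficientMatrix_phi2, trace_diagonal]
  calc _ = ((1 / √2 + 1 / √2 : ℝ) : ℂ) := by simp [Fin.sum_univ_eight]
    _ = (√2 : ℝ) := by rw [hsqrt]

theorem trace_vecMulVec_phi2 : (vecMulVec phi2 (star phi2)).trace = 1 := by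
  have hterm (q : Fin 8 × Fin 8) :
      ‖phi2 q‖ ^ 2 = if q ∈ ({(0, 0), (1, 1)} : Finset (Fin 8 × Fin 8)) then 1 / 2 else 0 := by
    by_cases hq : q = (0, 0) ∨ q = (1, 1) <;> simp [phi2, hq]
  rw [trace_vecMulVec_star, Fintype.sum_congr _ _ hterm, Finset.sum_ite_mem, Finset.univ_inter,
    Finset.sum_pair (by decide)]
  norm_num

theorem star_vecIdentity_dotProduct_self (ι : Type*) [Fintype ι] [DecidableEq ι] :
    star (vecIdentity ι) ⬝ᵥ vecIdentity ι = Fintype.card ι := by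
  rw [star_vecIdentity_dotProduct]
  simp [vecIdentity, trace]

theorem trace_isoState {d : ℕ} (hd : d ≠ 0) (p : ℝ) : (isoState d p).trace = 1 := by
  have hvec : (vecMulVec (vecIdentity (Fin d)) (star (vecIdentity (Fin d)))).trace = d := by
    rw [trace_vecMulVec, dotProduct_comm, star_vecIdentity_dotProduct_self, Fintype.card_fin]
  rw [isoState, projME_eq_smul_vecMulVec_vecIdentity, trace_add, trace_smul, trace_smul,
    trace_smul, hvec, trace_one]
  simp only [smul_eq_mul, Fintype.card_prod, Fintype.card_fin]
  push_cast
  field_simp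
  ring

theorem dotProduct_isoState_mulVec_vecIdentity {d : ℕ} (hd : d ≠ 0) (p : ℝ) :
    star (vecIdentity (Fin d)) ⬝ᵥ isoState d p *ᵥ vecIdentity (Fin d) = p * d + (1 - p) / d := by
  simp only [isoState, projME_eq_smul_vecMulVec_vecIdentity, add_mulVec, smul_mulVec,
    vecMulVec_mulVec, one_mulVec, dotProduct_add, dotProduct_smul, op_smul_eq_smul, smul_eq_mul,
    star_vecIdentity_dotProduct_self, Fintype.card_fin]
  push_cast
  field_simp

theorem trace_rhoTilde (l : ℝ) : (rhoTilde l).trace = 1 := by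
  rw [rhoTilde, trace_add, trace_smul, trace_smul, trace_isoState (by norm_num),
    trace_vecMulVec_phi2]
  simp

theorem dotProduct_rhoTilde_mulVec_vecIdentity (l : ℝ) :
    star (vecIdentity (Fin 8)) ⬝ᵥ rhoTilde l *ᵥ vecIdentity (Fin 8) =
      ((2 + 0.015 * l : ℝ) : ℂ) := by
  rw [rhoTilde, add_mulVec, smul_mulVec, smul_mulVec, dotProduct_add, dotProduct_smul,
    dotProduct_smul, dotProduct_isoState_mulVec_vecIdentity (by norm_num),
    star_dotProduct_vecMulVec_mulVec, star_vecIdentity_dotProduct_phi2]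
  rw [Complex.norm_real, Real.norm_eq_abs, sq_abs, Real.sq_sqrt zero_le_two]
  push_cast
  simp only [smul_eq_mul]
  ring

theorem two_add_mul_le_of_schmidtNumberLE_rhoTilde {l : ℝ} {r : ℕ}
    (h : SchmidtNumberLE (rhoTilde l) r) : 2 + 0.015 * l ≤ r := by
  simpa [dotProduct_rhoTilde_mulVec_vecIdentity, trace_rhoTilde, -Complex.ofReal_add] using
    h.re_dotProduct_mulVec_vecIdentity_le

theorem schmidtNumberLE_rhoTilde_zero : SchmidtNumberLE (rhoTilde 0) 2 := by
  simpa [rhoTilde] using schmidtNumberLE_vecMulVec schmidtRank_phi2_le_two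

theorem schmidtNumberLE_rhoTilde {l : ℝ} (hl0 : 0 ≤ l) (hl1 : l ≤ 1) :
    SchmidtNumberLE (rhoTilde l) 3 := by
  have hiso : SchmidtNumberLE (isoState 8 0.24) 3 :=
    schmidtNumberLE_isoState (by norm_num) (by norm_num) (by norm_num) (by norm_num)
  have hphi : SchmidtNumberLE (vecMulVec phi2 (star phi2)) 3 :=
    schmidtNumberLE_vecMulVec (schmidtRank_phi2_le_two.trans (by norm_num))
  exact (hiso.smul hl0).add (hphi.smul (sub_nonneg.mpr hl1))

end RhoTilde

/-- Lemma 1: `SN(ρ̃(0)) = 2` and `SN(ρ̃(λ)) = 3` for all `λ ∈ (0, 1]`. -/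
theorem schmidt_number_rhoTilde :
    schmidtNumber (rhoTilde 0) = 2 ∧
    ∀ l : ℝ, 0 < l → l ≤ 1 → schmidtNumber (rhoTilde l) = 3 := by
  constructor
  · refine IsLeast.csInf_eq ⟨schmidtNumberLE_rhoTilde_zero, fun r hr => ?_⟩
    have hr2 : (2 : ℝ) ≤ r := by simpa using two_add_mul_le_of_schmidtNumberLE_rhoTilde hr
    exact_mod_cast hr2
  · intro l hl0 hl1
    refine IsLeast.csInf_eq ⟨schmidtNumberLE_rhoTilde hl0.le hl1, fun r hr => ?_⟩
    have hr2 : (2 : ℝ) < r := by linarith [two_add_mul_le_of_schmidtNumberLE_rhoTilde hr]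
    exact Nat.succ_le_of_lt (by exact_mod_cast hr2)
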